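/- Suppose ξ = 2πp/q, where p and q are coprime positive integers with 0 < p/q < 1/2. Fix δ ∈ ℝ, an integer ℓ ≥ 0 and an integer k with 0 ≤ k < q, and set N_m = mq + k + 1 for m ≥ 1. Then for every choice, for each N, of a unit eigenvector u_N of H(δ)H(δ)ᵀ corresponding to its largest eigenvalue, r_{N_m − 1 − ℓ}(N_m) → δ·G(a,ξ)·(C₁(ℓ)·cos(2πkp/q + φ) + C₂(ℓ)·sin(2πkp/q + φ)) as m → ∞. -/

import Mathlib

open Filter Matrix

/-- Hankelization (diagonal averaging): the `j`-th value is the average of the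
entries `Y i k` with `i + k = j`. -/
noncomputable def hankelize {L K : ℕ} (Y : Matrix (Fin L) (Fin K) ℝ) (j : ℕ) : ℝ :=
  (∑ i : Fin L, ∑ k : Fin K, if (i : ℕ) + (k : ℕ) = j then Y i k else 0) /
  (∑ i : Fin L, ∑ k : Fin K, if (i : ℕ) + (k : ℕ) = j then (1 : ℝ) else 0)

/-- The `L × K` Hankel (trajectory) matrix of a series `x`. -/
noncomputable def hankelOf (x : ℕ → ℝ) (L K : ℕ) : Matrix (Fin L) (Fin K) ℝ :=
  Matrix.of fun i k => x ((i : ℕ) + (k : ℕ))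

/-- Squared Euclidean norm of a vector. -/
noncomputable def normSq {M : ℕ} (w : Fin M → ℝ) : ℝ := ∑ i, w i ^ 2

/-- `u` is a unit eigenvector of `A` corresponding to its largest eigenvalue. -/
def IsTopEigenvector {L : ℕ} (A : Matrix (Fin L) (Fin L) ℝ) (u : Fin L → ℝ) : Prop :=
  normSq u = 1 ∧ ∃ μ : ℝ, A.mulVec u = μ • u ∧
    ∀ (ν : ℝ) (v : Fin L → ℝ), v ≠ 0 → A.mulVec v = ν • v → ν ≤ μ

/-- The exponential signal `x_n = a^n`. -/
noncomputable def expSignal (a : ℝ) : ℕ → ℝ := fun n => a ^ n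

/-- The harmonic noise `e_n = cos (ξ n + φ)`. -/
noncomputable def cosNoise (ξ φ : ℝ) : ℕ → ℝ := fun n => Real.cos (ξ * (n : ℝ) + φ)

/-- The vector `W_M = (1, a, …, a^{M-1})ᵀ`. -/
noncomputable def Wvec (a : ℝ) (M : ℕ) : Fin M → ℝ := fun i => a ^ (i : ℕ)

/-- `ρ_j = (𝒮(P₀ E Hᵀ S₀ H))_j + (𝒮(P₀⊥ E))_j`. -/
noncomputable def rho (a ξ φ : ℝ) (L K : ℕ) (j : ℕ) : ℝ :=
  let H := hankelOf (expSignal a) L K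
  let E := hankelOf (cosNoise ξ φ) L K
  let P0perp : Matrix (Fin L) (Fin L) ℝ :=
    (normSq (Wvec a L))⁻¹ • Matrix.vecMulVec (Wvec a L) (Wvec a L)
  let P0 : Matrix (Fin L) (Fin L) ℝ := 1 - P0perp
  let S0 : Matrix (Fin L) (Fin L) ℝ :=
    ((normSq (Wvec a L)) ^ 2 * normSq (Wvec a K))⁻¹ • Matrix.vecMulVec (Wvec a L) (Wvec a L)
  hankelize (P0 * E * Hᵀ * S0 * H) j + hankelize (P0perp * E) j

/-- The matrix `H(δ)H(δ)ᵀ` for the perturbed series `a^n + δ cos(ξ n + φ)`. -/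
noncomputable def HdeltaSq (a ξ φ δ : ℝ) (L K : ℕ) : Matrix (Fin L) (Fin L) ℝ :=
  let Hδ := hankelOf (expSignal a) L K + δ • hankelOf (cosNoise ξ φ) L K
  Hδ * Hδᵀ

/-- The SSA reconstruction error `r_j = (𝒮(u uᵀ H(δ)))_j - a^j`. -/
noncomputable def recErr (a ξ φ δ : ℝ) (L K : ℕ) (u : Fin L → ℝ) (j : ℕ) : ℝ :=
  hankelize (Matrix.vecMulVec u u *
    (hankelOf (expSignal a) L K + δ • hankelOf (cosNoise ξ φ) L K)) j - a ^ j

/-- `G(a,ξ) = (a²-1)/(a(a²+1-2a cos ξ))`. -/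
noncomputable def Gfun (a ξ : ℝ) : ℝ := (a ^ 2 - 1) / (a * (a ^ 2 + 1 - 2 * a * Real.cos ξ))

/-- The coefficient `C₁(ℓ)`. -/
noncomputable def C1 (a ξ : ℝ) (ℓ : ℕ) : ℝ :=
  (2 / (1 + (ℓ : ℝ))) * (a * Real.cos ((ℓ : ℝ) * ξ) - a ^ (-(ℓ : ℤ)) * Real.cos ξ)
  - (a ^ 2 + 1 - 2 * a * Real.cos ξ - 2 * Real.sin ξ ^ 2) * Gfun a ξ * a ^ (-(ℓ : ℤ))

/-- The coefficient `C₂(ℓ)`. -/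
noncomputable def C2 (a ξ : ℝ) (ℓ : ℕ) : ℝ :=
  (2 / (1 + (ℓ : ℝ))) * (a * Real.sin ((ℓ : ℝ) * ξ) + a ^ (-(ℓ : ℤ)) * Real.sin ξ)
  - 2 * Real.sin ξ * (a - Real.cos ξ) * Gfun a ξ * a ^ (-(ℓ : ℤ))

/-- `D(ℓ) = G(a,ξ)·√(C₁(ℓ)² + C₂(ℓ)²)`. -/
noncomputable def Dfun (a ξ : ℝ) (ℓ : ℕ) : ℝ :=
  Gfun a ξ * Real.sqrt (C1 a ξ ℓ ^ 2 + C2 a ξ ℓ ^ 2)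

/-!
The signal matrix is the rank-one matrix `H = x yᵀ` with `x = Wvec a L`, `y = Wvec a K`. Let `P₀`
and `R₀` be the orthogonal projections onto the lines of `x` and `y`, and put `F = δ E`. The top
singular directions of `H + F` make angles `O(‖F‖ / ‖H‖)` with those of `H`, so projecting `H + F`
onto its top left singular direction gives `H + (P₀ F + F R₀ - P₀ F R₀) + O(‖F‖² / ‖H‖)`. The
remainder vanishes in the limit, since `‖F‖² ≤ δ² L K` while `‖H‖ ≥ a ^ (L + K - 2)`.

Counted from the end of the series, the noise is `Re (B η ^ s)` with `η = exp (-iξ)` and a phase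
factor `B = exp (i(ξ (N - 1) + φ))`. Hence the averaged first-order term is `δ Re (B c)`, where `c`
depends only on the factors `κ_L`, `κ_K` by which `P₀` and `R₀` scale a harmonic. Both converge to
`G (a - exp (iξ))` by geometric summation, and `c` then converges to `G (C₁ - i C₂)`.
-/

section RankOnePerturbation

open scoped Matrix.Norms.Frobenius

variable {m n : Type*} [Fintype m] [Fintype n]

theorem frobenius_norm_sq (A : Matrix m n ℝ) : ‖A‖ ^ 2 = ∑ i, ∑ j, A i j ^ 2 := by
  have hnonneg : 0 ≤ ∑ i, ∑ j, A i j ^ 2 := by positivity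
  rw [frobenius_norm_def, ← Real.sqrt_eq_rpow]
  simpa using Real.sq_sqrt hnonneg

theorem abs_apply_le_frobenius_norm (A : Matrix m n ℝ) (i : m) (j : n) : |A i j| ≤ ‖A‖ := by
  refine abs_le_of_sq_le_sq ?_ (norm_nonneg A)
  calc A i j ^ 2 ≤ ∑ j, A i j ^ 2 :=
        Finset.single_le_sum (f := fun j => A i j ^ 2) (fun _ _ => sq_nonneg _) (Finset.mem_univ j)
    _ ≤ ∑ i, ∑ j, A i j ^ 2 :=
        Finset.single_le_sum (f := fun i => ∑ j, A i j ^ 2)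
          (fun _ _ => Finset.sum_nonneg fun _ _ => sq_nonneg _) (Finset.mem_univ i)
    _ = ‖A‖ ^ 2 := (frobenius_norm_sq A).symm

theorem dotProduct_self_eq_sum_sq (x : n → ℝ) : x ⬝ᵥ x = ∑ i, x i ^ 2 := by
  simp only [dotProduct, sq]

theorem dotProduct_self_nonneg (x : n → ℝ) : 0 ≤ x ⬝ᵥ x := by
  simpa using dotProduct_self_star_nonneg x

theorem dotProduct_self_pos {x : n → ℝ} (hx : x ≠ 0) : 0 < x ⬝ᵥ x := by
  simpa using dotProduct_star_self_pos_iff.2 hx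

theorem dotProduct_sq_le (x y : n → ℝ) : (x ⬝ᵥ y) ^ 2 ≤ (x ⬝ᵥ x) * (y ⬝ᵥ y) := by
  simp only [dotProduct_self_eq_sum_sq]
  exact Finset.sum_mul_sq_le_sq_mul_sq Finset.univ x y

theorem frobenius_norm_vecMulVec_sq (x : m → ℝ) (y : n → ℝ) :
    ‖vecMulVec x y‖ ^ 2 = (x ⬝ᵥ x) * (y ⬝ᵥ y) := by
  simp only [frobenius_norm_sq, vecMulVec_apply, mul_pow, dotProduct_self_eq_sum_sq,
    Finset.sum_mul_sum]

theorem mulVec_dotProduct_self_le (A : Matrix m n ℝ) (x : n → ℝ) :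
    (A *ᵥ x) ⬝ᵥ (A *ᵥ x) ≤ ‖A‖ ^ 2 * (x ⬝ᵥ x) := by
  rw [frobenius_norm_sq, Finset.sum_mul, dotProduct_self_eq_sum_sq]
  refine Finset.sum_le_sum fun i _ => ?_
  rw [← dotProduct_self_eq_sum_sq]
  exact dotProduct_sq_le (A i) x

/-- The orthogonal projection onto the line spanned by a nonzero vector `x`
(the zero matrix for `x = 0`). -/
noncomputable def lineProj (x : n → ℝ) : Matrix n n ℝ := (x ⬝ᵥ x)⁻¹ • vecMulVec x x

theorem lineProj_of_dotProduct_self_eq_one {x : n → ℝ} (hx : x ⬝ᵥ x = 1) :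
    lineProj x = vecMulVec x x := by
  rw [lineProj, hx, inv_one, one_smul]

theorem lineProj_mul_vecMulVec {ι : Type*} {x : n → ℝ} (hx : x ≠ 0) (y : ι → ℝ) :
    lineProj x * vecMulVec x y = vecMulVec x y := by
  rw [lineProj, Matrix.smul_mul, vecMulVec_mul_vecMulVec, vecMulVec_smul, smul_smul,
    inv_mul_cancel₀ (dotProduct_self_pos hx).ne', one_smul]

theorem vecMulVec_mul_lineProj {ι : Type*} (x : ι → ℝ) {y : n → ℝ} (hy : y ≠ 0) :
    vecMulVec x y * lineProj y = vecMulVec x y := by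
  rw [lineProj, Matrix.mul_smul, vecMulVec_mul_vecMulVec, vecMulVec_smul, smul_smul,
    inv_mul_cancel₀ (dotProduct_self_pos hy).ne', one_smul]

theorem lineProj_mul_self {x : n → ℝ} (hx : x ≠ 0) : lineProj x * lineProj x = lineProj x := by
  conv_lhs => rw [lineProj.eq_1 x, Matrix.mul_smul, ← lineProj.eq_1 x, lineProj_mul_vecMulVec hx]
  rfl

theorem norm_lineProj {x : n → ℝ} (hx : x ≠ 0) : ‖lineProj x‖ = 1 := by
  have hpos := dotProduct_self_pos hx
  have hnorm : ‖vecMulVec x x‖ = x ⬝ᵥ x := by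
    rw [← sq_eq_sq₀ (norm_nonneg _) hpos.le, frobenius_norm_vecMulVec_sq, sq]
  rw [lineProj, norm_smul, hnorm, norm_inv, Real.norm_of_nonneg hpos.le, inv_mul_cancel₀ hpos.ne']

theorem norm_lineProj_sub_lineProj_sq {x y : n → ℝ} (hx : x ≠ 0) (hy : y ≠ 0) :
    ‖lineProj x - lineProj y‖ ^ 2 = 2 * (1 - (x ⬝ᵥ y) ^ 2 / ((x ⬝ᵥ x) * (y ⬝ᵥ y))) := by
  have hx' := (dotProduct_self_pos hx).ne'
  have hy' := (dotProduct_self_pos hy).ne'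
  have hcross : ∑ i, ∑ j, lineProj x i j * lineProj y i j =
      (x ⬝ᵥ x)⁻¹ * (y ⬝ᵥ y)⁻¹ * (x ⬝ᵥ y) ^ 2 := by
    rw [sq, dotProduct.eq_1 x y, Finset.sum_mul_sum]
    simp only [Finset.mul_sum, lineProj, Matrix.smul_apply, vecMulVec_apply, smul_eq_mul]
    exact Finset.sum_congr rfl fun i _ => Finset.sum_congr rfl fun j _ => by ring
  have hexpand : ‖lineProj x - lineProj y‖ ^ 2 =
      ‖lineProj x‖ ^ 2 + ‖lineProj y‖ ^ 2 - 2 * ∑ i, ∑ j, lineProj x i j * lineProj y i j := by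
    simp only [frobenius_norm_sq, Finset.mul_sum, ← Finset.sum_add_distrib,
      ← Finset.sum_sub_distrib, Matrix.sub_apply]
    exact Finset.sum_congr rfl fun i _ => Finset.sum_congr rfl fun j _ => by ring
  rw [hexpand, hcross, norm_lineProj hx, norm_lineProj hy]
  field_simp
  ring

/-- `u` and `v` are unit left and right singular vectors of `A` for the singular value `σ`. -/
structure IsSingularPair (A : Matrix m n ℝ) (σ : ℝ) (u : m → ℝ) (v : n → ℝ) : Prop where
  left_unit : u ⬝ᵥ u = 1
  right_unit : v ⬝ᵥ v = 1
  mulVec_right : A *ᵥ v = σ • u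
  transpose_mulVec_left : Aᵀ *ᵥ u = σ • v

namespace IsSingularPair

variable {A F : Matrix m n ℝ} {σ : ℝ} {u x : m → ℝ} {v y : n → ℝ}

theorem transpose (h : IsSingularPair A σ u v) : IsSingularPair Aᵀ σ v u :=
  ⟨h.right_unit, h.left_unit, h.transpose_mulVec_left, h.mulVec_right⟩

theorem left_ne_zero (h : IsSingularPair A σ u v) : u ≠ 0 := by
  rintro rfl
  simpa using h.left_unit

theorem right_ne_zero (h : IsSingularPair A σ u v) : v ≠ 0 := h.transpose.left_ne_zero

theorem lineProj_left_mul (h : IsSingularPair A σ u v) : lineProj u * A = A * lineProj v := by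
  rw [lineProj_of_dotProduct_self_eq_one h.left_unit, lineProj_of_dotProduct_self_eq_one
    h.right_unit, vecMulVec_mul, mul_vecMulVec, ← mulVec_transpose, h.transpose_mulVec_left,
    h.mulVec_right, smul_vecMulVec, vecMulVec_smul]

theorem sq_mul_one_sub_sq_div_le (h : IsSingularPair (vecMulVec x y + F) σ u v) (hx : x ≠ 0) :
    σ ^ 2 * (1 - (u ⬝ᵥ x) ^ 2 / (x ⬝ᵥ x)) ≤ ‖F‖ ^ 2 := by
  have hpos := dotProduct_self_pos hx
  have hσu : σ • u = (y ⬝ᵥ v) • x + F *ᵥ v := by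
    rw [← h.mulVec_right, add_mulVec, vecMulVec_mulVec, op_smul_eq_smul]
  have hinner : σ * (u ⬝ᵥ x) = (y ⬝ᵥ v) * (x ⬝ᵥ x) + (F *ᵥ v) ⬝ᵥ x := by
    simpa [add_dotProduct] using congrArg (· ⬝ᵥ x) hσu
  have hsq : σ ^ 2 = (y ⬝ᵥ v) ^ 2 * (x ⬝ᵥ x) + 2 * (y ⬝ᵥ v) * ((F *ᵥ v) ⬝ᵥ x) +
      (F *ᵥ v) ⬝ᵥ (F *ᵥ v) := by
    have hself := congrArg (fun w => w ⬝ᵥ w) hσu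
    simp only [smul_dotProduct, dotProduct_smul, h.left_unit, add_dotProduct, dotProduct_add,
      smul_eq_mul, dotProduct_comm x (F *ᵥ v)] at hself
    linear_combination hself
  calc σ ^ 2 * (1 - (u ⬝ᵥ x) ^ 2 / (x ⬝ᵥ x))
      = σ ^ 2 - (σ * (u ⬝ᵥ x)) ^ 2 / (x ⬝ᵥ x) := by ring
    _ = (F *ᵥ v) ⬝ᵥ (F *ᵥ v) - ((F *ᵥ v) ⬝ᵥ x) ^ 2 / (x ⬝ᵥ x) := by
        rw [hinner, hsq]
        field_simp
        ring
    _ ≤ (F *ᵥ v) ⬝ᵥ (F *ᵥ v) := sub_le_self _ (by positivity)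
    _ ≤ ‖F‖ ^ 2 := by simpa [h.right_unit] using mulVec_dotProduct_self_le F v

theorem norm_lineProj_left_sub_le (h : IsSingularPair (vecMulVec x y + F) σ u v) (hx : x ≠ 0)
    (hσ : 0 < σ) : ‖lineProj u - lineProj x‖ ≤ 2 * ‖F‖ / σ := by
  rw [le_div_iff₀' hσ]
  refine le_of_sq_le_sq ?_ (by positivity)
  have hsin := h.sq_mul_one_sub_sq_div_le hx
  rw [mul_pow, norm_lineProj_sub_lineProj_sq h.left_ne_zero hx, h.left_unit, one_mul]
  nlinarith [sq_nonneg ‖F‖]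

theorem norm_lineProj_right_sub_le (h : IsSingularPair (vecMulVec x y + F) σ u v) (hy : y ≠ 0)
    (hσ : 0 < σ) : ‖lineProj v - lineProj y‖ ≤ 2 * ‖F‖ / σ := by
  have ht := h.transpose
  rw [transpose_add, transpose_vecMulVec] at ht
  simpa using ht.norm_lineProj_left_sub_le hy hσ

end IsSingularPair

/-- First-order term, in the perturbation `F`, of the best rank-one approximation of
`vecMulVec x y + F`. -/
noncomputable def rankOneVariation (x : m → ℝ) (y : n → ℝ) (F : Matrix m n ℝ) : Matrix m n ℝ :=
  lineProj x * F + F * lineProj y - lineProj x * F * lineProj y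

variable {F : Matrix m n ℝ} {σ : ℝ} {u x : m → ℝ} {v y : n → ℝ}

/-- With `A = vecMulVec x y + F`, `P = lineProj u`, `R = lineProj v` one has `P A = A R = P A R`.
Writing `P A` as `P A + A R - P A R` leaves no term linear in `P - lineProj x` or `R - lineProj y`
without a factor `F`. -/
theorem IsSingularPair.lineProj_mul_sub_eq (h : IsSingularPair (vecMulVec x y + F) σ u v)
    (hx : x ≠ 0) (hy : y ≠ 0) :
    lineProj u * (vecMulVec x y + F) - vecMulVec x y - rankOneVariation x y F =
      (lineProj u - lineProj x) * F + F * (lineProj v - lineProj y) -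
        ((lineProj u - lineProj x) * F * lineProj v + lineProj x * F * (lineProj v - lineProj y)) -
        (lineProj u - lineProj x) * vecMulVec x y * (lineProj v - lineProj y) := by
  have hcomm := h.lineProj_left_mul
  have habsorb : lineProj u * (vecMulVec x y + F) * lineProj v =
      (vecMulVec x y + F) * lineProj v := by
    rw [hcomm, Matrix.mul_assoc, lineProj_mul_self h.right_ne_zero]
  simp only [rankOneVariation, Matrix.mul_add, Matrix.add_mul, Matrix.mul_sub, Matrix.sub_mul,
    Matrix.mul_assoc, lineProj_mul_vecMulVec hx, vecMulVec_mul_lineProj x hy] at habsorb ⊢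
  linear_combination (norm := abel) habsorb

theorem IsSingularPair.norm_lineProj_mul_sub_le (h : IsSingularPair (vecMulVec x y + F) σ u v)
    (hx : x ≠ 0) (hy : y ≠ 0) (hσ : 0 < σ) (hxy : ‖vecMulVec x y‖ ≤ 2 * σ) :
    ‖lineProj u * (vecMulVec x y + F) - vecMulVec x y - rankOneVariation x y F‖ ≤
      16 * ‖F‖ ^ 2 / σ := by
  set P := lineProj u
  set P₀ := lineProj x
  set R := lineProj v
  set R₀ := lineProj y
  set d := 2 * ‖F‖ / σ
  have hP : ‖P - P₀‖ ≤ d := h.norm_lineProj_left_sub_le hx hσ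
  have hR : ‖R - R₀‖ ≤ d := h.norm_lineProj_right_sub_le hy hσ
  have : 0 ≤ d := by positivity
  have hPF : ‖(P - P₀) * F‖ ≤ d * ‖F‖ := frobenius_norm_mul _ _ |>.trans (by gcongr)
  have hFR : ‖F * (R - R₀)‖ ≤ ‖F‖ * d := frobenius_norm_mul _ _ |>.trans (by gcongr)
  have hPFR : ‖(P - P₀) * F * R‖ ≤ d * ‖F‖ * 1 :=
    frobenius_norm_mul _ _ |>.trans (by gcongr; exact (norm_lineProj h.right_ne_zero).le)
  have hP₀FR : ‖P₀ * F * (R - R₀)‖ ≤ 1 * ‖F‖ * d :=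
    frobenius_norm_mul _ _ |>.trans (by
      gcongr
      exact (frobenius_norm_mul _ _).trans_eq (by rw [norm_lineProj hx]))
  have hquad : ‖(P - P₀) * vecMulVec x y * (R - R₀)‖ ≤ d * (2 * σ) * d :=
    frobenius_norm_mul _ _ |>.trans (by
      gcongr
      exact (frobenius_norm_mul _ _).trans (by gcongr))
  rw [h.lineProj_mul_sub_eq hx hy]
  calc _ ≤ ‖(P - P₀) * F‖ + ‖F * (R - R₀)‖ + (‖(P - P₀) * F * R‖ + ‖P₀ * F * (R - R₀)‖) +
        ‖(P - P₀) * vecMulVec x y * (R - R₀)‖ := by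
        refine (norm_sub_le _ _).trans (add_le_add_left ((norm_sub_le _ _).trans ?_) _)
        exact add_le_add (norm_add_le _ _) (norm_add_le _ _)
    _ ≤ d * ‖F‖ + ‖F‖ * d + (d * ‖F‖ * 1 + 1 * ‖F‖ * d) + d * (2 * σ) * d := by gcongr
    _ = 16 * ‖F‖ ^ 2 / σ := by
        simp only [d]
        field_simp
        ring

theorem dotProduct_mulVec_self_le_of_eigenvalue_le {B : Matrix n n ℝ}
    (hB : B.IsHermitian) {μ : ℝ}
    (hμ : ∀ (ν : ℝ) (w : n → ℝ), w ≠ 0 → B *ᵥ w = ν • w → ν ≤ μ) (z : n → ℝ) :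
    z ⬝ᵥ B *ᵥ z ≤ μ * (z ⬝ᵥ z) := by
  classical
  have hherm : (μ • 1 - B).IsHermitian := (isHermitian_one.smul (.all μ)).sub hB
  have hpsd : (μ • 1 - B).PosSemidef := by
    refine hherm.posSemidef_iff_eigenvalues_nonneg.2 fun i => ?_
    have heigen := hherm.mulVec_eigenvectorBasis i
    rw [sub_mulVec, smul_mulVec, one_mulVec, sub_eq_iff_eq_add', ← sub_eq_iff_eq_add,
      ← sub_smul] at heigen
    have hne : (hherm.eigenvectorBasis i).ofLp ≠ 0 := by
      simpa using hherm.eigenvectorBasis.orthonormal.ne_zero i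
    simpa using hμ _ _ hne heigen.symm
  have hnonneg := hpsd.dotProduct_mulVec_nonneg z
  simp only [star_trivial, sub_mulVec, smul_mulVec, one_mulVec, dotProduct_sub, dotProduct_smul,
    smul_eq_mul] at hnonneg
  linarith

theorem IsTopEigenvector.exists_isSingularPair {L K : ℕ} {A : Matrix (Fin L) (Fin K) ℝ}
    {u : Fin L → ℝ} (hu : IsTopEigenvector (A * Aᵀ) u) (hA : A ≠ 0) :
    ∃ (σ : ℝ) (v : Fin K → ℝ), 0 < σ ∧ IsSingularPair A σ u v ∧
      ∀ x, (Aᵀ *ᵥ x) ⬝ᵥ (Aᵀ *ᵥ x) ≤ σ ^ 2 * (x ⬝ᵥ x) := by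
  obtain ⟨hunit, μ, hμ, hmax⟩ := hu
  have hgram (x : Fin L → ℝ) : x ⬝ᵥ (A * Aᵀ) *ᵥ x = (Aᵀ *ᵥ x) ⬝ᵥ (Aᵀ *ᵥ x) := by
    rw [← mulVec_mulVec, dotProduct_mulVec, ← mulVec_transpose]
  have hle (x : Fin L → ℝ) : (Aᵀ *ᵥ x) ⬝ᵥ (Aᵀ *ᵥ x) ≤ μ * (x ⬝ᵥ x) := by
    rw [← hgram]
    exact dotProduct_mulVec_self_le_of_eigenvalue_le (isHermitian_mul_conjTranspose_self A) hmax x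
  have hu1 : u ⬝ᵥ u = 1 := by rw [dotProduct_self_eq_sum_sq]; exact hunit
  have hμpos : 0 < μ := by
    by_contra! hμ0
    have hker (x : Fin L → ℝ) : Aᵀ *ᵥ x = 0 :=
      dotProduct_self_eq_zero.1 <| (hle x).trans
        (mul_nonpos_of_nonpos_of_nonneg hμ0 (dotProduct_self_nonneg x)) |>.antisymm
        (dotProduct_self_nonneg _)
    exact hA (transpose_eq_zero.1 (ext_of_mulVec_single fun i => by rw [hker, zero_mulVec]))
  have hσ : √μ ^ 2 = μ := Real.sq_sqrt hμpos.le
  have hσ0 : √μ ≠ 0 := (Real.sqrt_pos.2 hμpos).ne'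
  refine ⟨√μ, (√μ)⁻¹ • Aᵀ *ᵥ u, Real.sqrt_pos.2 hμpos, ⟨hu1, ?_, ?_, ?_⟩, fun x => by
    simpa only [hσ] using hle x⟩
  · rw [smul_dotProduct, dotProduct_smul, ← hgram, hμ, dotProduct_smul, hu1]
    simp only [smul_eq_mul]
    field_simp
    exact hσ.symm
  · rw [mulVec_smul, mulVec_mulVec, hμ, smul_smul]
    congr 1
    field_simp
    exact hσ.symm
  · rw [smul_smul, mul_inv_cancel₀ hσ0, one_smul]

theorem abs_dotProduct_le_mul_norm_vecMulVec {w : n → ℝ} {c : ℝ} (hc : 0 ≤ c)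
    (hw : w ⬝ᵥ w ≤ c ^ 2 * (x ⬝ᵥ x)) : |w ⬝ᵥ y| ≤ c * ‖vecMulVec x y‖ := by
  refine abs_le_of_sq_le_sq ?_ (by positivity)
  calc (w ⬝ᵥ y) ^ 2 ≤ (w ⬝ᵥ w) * (y ⬝ᵥ y) := dotProduct_sq_le w y
    _ ≤ c ^ 2 * (x ⬝ᵥ x) * (y ⬝ᵥ y) := mul_le_mul_of_nonneg_right hw (dotProduct_self_nonneg y)
    _ = (c * ‖vecMulVec x y‖) ^ 2 := by rw [mul_pow, frobenius_norm_vecMulVec_sq, mul_assoc]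

theorem norm_vecMulVec_le_add_norm (hσ : 0 ≤ σ)
    (hx : ((vecMulVec x y + F)ᵀ *ᵥ x) ⬝ᵥ ((vecMulVec x y + F)ᵀ *ᵥ x) ≤ σ ^ 2 * (x ⬝ᵥ x)) :
    ‖vecMulVec x y‖ ≤ σ + ‖F‖ := by
  have hA := (le_abs_self _).trans (abs_dotProduct_le_mul_norm_vecMulVec (y := y) hσ hx)
  have hF := (neg_abs_le _).trans' (neg_le_neg (abs_dotProduct_le_mul_norm_vecMulVec (y := y)
    (norm_nonneg F) (by simpa using mulVec_dotProduct_self_le Fᵀ x)))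
  have hsplit : ((vecMulVec x y + F)ᵀ *ᵥ x) ⬝ᵥ y = ‖vecMulVec x y‖ ^ 2 + (Fᵀ *ᵥ x) ⬝ᵥ y := by
    rw [transpose_add, transpose_vecMulVec, add_mulVec, vecMulVec_mulVec, op_smul_eq_smul,
      add_dotProduct, smul_dotProduct, frobenius_norm_vecMulVec_sq, smul_eq_mul]
  rw [hsplit] at hA
  by_contra! hlt
  nlinarith [norm_nonneg F]

theorem IsTopEigenvector.norm_vecMulVec_mul_sub_le {L K : ℕ} {x u : Fin L → ℝ} {y : Fin K → ℝ}
    {F : Matrix (Fin L) (Fin K) ℝ}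
    (hu : IsTopEigenvector ((vecMulVec x y + F) * (vecMulVec x y + F)ᵀ) u)
    (hF : 2 * ‖F‖ < ‖vecMulVec x y‖) :
    ‖vecMulVec u u * (vecMulVec x y + F) - vecMulVec x y - rankOneVariation x y F‖ ≤
      32 * ‖F‖ ^ 2 / ‖vecMulVec x y‖ := by
  have hpos : 0 < ‖vecMulVec x y‖ := by linarith [norm_nonneg F]
  have hx : x ≠ 0 := by rintro rfl; simp at hpos
  have hy : y ≠ 0 := by
    rintro rfl
    simpa using (frobenius_norm_vecMulVec_sq x (0 : Fin K → ℝ)).symm.trans_ne (pow_pos hpos 2).ne'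
  have hA : vecMulVec x y + F ≠ 0 := by
    intro h0
    rw [eq_neg_of_add_eq_zero_left h0, norm_neg] at hF
    linarith [norm_nonneg F]
  obtain ⟨σ, v, hσ, hpair, hmax⟩ := hu.exists_isSingularPair hA
  have hT : ‖vecMulVec x y‖ ≤ 2 * σ := by
    linarith [norm_vecMulVec_le_add_norm hσ.le (hmax x)]
  rw [← lineProj_of_dotProduct_self_eq_one hpair.left_unit]
  refine (hpair.norm_lineProj_mul_sub_le hx hy hσ hT).trans ?_
  rw [div_le_div_iff₀ hσ hpos]
  nlinarith [mul_le_mul_of_nonneg_left hT (sq_nonneg ‖F‖)]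

end RankOnePerturbation

section Hankelization

open scoped Matrix.Norms.Frobenius
open Finset.HasAntidiagonal

variable {L K : ℕ}

theorem hankelize_sub (X Y : Matrix (Fin L) (Fin K) ℝ) (j : ℕ) :
    hankelize (X - Y) j = hankelize X j - hankelize Y j := by
  simp only [hankelize, ← sub_div, ← Finset.sum_sub_distrib, Matrix.sub_apply]
  congr 1
  refine Finset.sum_congr rfl fun i _ => Finset.sum_congr rfl fun k _ => ?_
  split_ifs <;> simp

theorem sum_fin_rev {M : ℕ} {β : Type*} [AddCommMonoid β] (f : Fin M → β) :
    ∑ i : Fin M, f i.rev = ∑ i, f i :=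
  Equiv.sum_comp Fin.revPerm f

/-- Reversing both indices turns the antidiagonal `j` of an `L × K` matrix into the antidiagonal
`ℓ = L + K - 2 - j`, which is complete as long as `ℓ < L` and `ℓ < K`. -/
theorem sum_ite_add_eq_sum_antidiagonal {Y : Matrix (Fin L) (Fin K) ℝ} {f : ℕ → ℕ → ℝ}
    (hY : ∀ s t, Y (Fin.rev s) (Fin.rev t) = f s t) {j ℓ : ℕ} (hL : ℓ < L) (hK : ℓ < K)
    (hj : j + ℓ + 2 = L + K) :
    (∑ i : Fin L, ∑ k : Fin K, if (i : ℕ) + (k : ℕ) = j then Y i k else 0) =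
      ∑ st ∈ antidiagonal ℓ, f st.1 st.2 := by
  have hrev (s : Fin L) (t : Fin K) : (s.rev : ℕ) + (t.rev : ℕ) = j ↔ (s : ℕ) + (t : ℕ) = ℓ := by
    rw [Fin.val_rev, Fin.val_rev]
    omega
  calc (∑ i : Fin L, ∑ k : Fin K, if (i : ℕ) + (k : ℕ) = j then Y i k else 0)
      = ∑ s : Fin L, ∑ t : Fin K, if (s : ℕ) + (t : ℕ) = ℓ then f s t else 0 := by
        rw [← sum_fin_rev]
        refine Finset.sum_congr rfl fun s _ => ?_
        rw [← sum_fin_rev]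
        simp only [hrev, hY]
    _ = ∑ s ∈ Finset.range L, ∑ t ∈ Finset.range K, if s + t = ℓ then f s t else 0 := by
        simp only [Finset.sum_range]
    _ = ∑ st ∈ antidiagonal ℓ, f st.1 st.2 := by
        rw [← Finset.sum_product' (f := fun s t => if s + t = ℓ then f s t else 0),
          ← Finset.sum_filter]
        congr 1
        ext ⟨s, t⟩
        simp only [Finset.mem_filter, Finset.mem_product, Finset.mem_range,
          mem_antidiagonal]
        omega

theorem hankelize_eq_sum_antidiagonal_div {Y : Matrix (Fin L) (Fin K) ℝ} {f : ℕ → ℕ → ℝ}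
    (hY : ∀ s t, Y (Fin.rev s) (Fin.rev t) = f s t) {j ℓ : ℕ} (hL : ℓ < L) (hK : ℓ < K)
    (hj : j + ℓ + 2 = L + K) :
    hankelize Y j = (∑ st ∈ antidiagonal ℓ, f st.1 st.2) / (ℓ + 1) := by
  rw [hankelize, sum_ite_add_eq_sum_antidiagonal hY hL hK hj,
    sum_ite_add_eq_sum_antidiagonal (Y := fun _ _ => 1) (f := fun _ _ => 1) (fun _ _ => rfl) hL hK
      hj]
  simp

theorem hankelize_hankelOf (x : ℕ → ℝ) {j ℓ : ℕ} (hL : ℓ < L) (hK : ℓ < K)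
    (hj : j + ℓ + 2 = L + K) : hankelize (hankelOf x L K) j = x j := by
  have hrev (s : Fin L) (t : Fin K) :
      hankelOf x L K s.rev t.rev = x (j + ℓ - (s + t)) := by
    rw [hankelOf, of_apply, Fin.val_rev, Fin.val_rev]
    congr 1
    omega
  have hconst : ∀ st ∈ antidiagonal ℓ, x (j + ℓ - (st.1 + st.2)) = x j := fun st hst => by
    rw [mem_antidiagonal.1 hst, Nat.add_sub_cancel]
  rw [hankelize_eq_sum_antidiagonal_div (f := fun s t => x (j + ℓ - (s + t))) hrev hL hK hj,
    Finset.sum_congr rfl hconst, Finset.sum_const, Finset.Nat.card_antidiagonal, nsmul_eq_mul]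
  push_cast
  field_simp

theorem abs_hankelize_le_norm (Y : Matrix (Fin L) (Fin K) ℝ) (j : ℕ) : |hankelize Y j| ≤ ‖Y‖ := by
  have hcount : (0 : ℝ) ≤ ∑ i : Fin L, ∑ k : Fin K, if (i : ℕ) + (k : ℕ) = j then 1 else 0 := by
    positivity
  rw [hankelize, abs_div, abs_of_nonneg hcount]
  refine div_le_of_le_mul₀ hcount (norm_nonneg Y) ?_
  rw [Finset.mul_sum]
  refine Finset.abs_sum_le_sum_abs _ _ |>.trans (Finset.sum_le_sum fun i _ => ?_)
  rw [Finset.mul_sum]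
  refine Finset.abs_sum_le_sum_abs _ _ |>.trans (Finset.sum_le_sum fun k _ => ?_)
  split_ifs
  · simpa using abs_apply_le_frobenius_norm Y i k
  · simp

end Hankelization

section ExponentialSignal

open scoped Matrix.Norms.Frobenius

variable {a : ℝ} {L K M : ℕ}

theorem hankelOf_expSignal (a : ℝ) (L K : ℕ) :
    hankelOf (expSignal a) L K = vecMulVec (Wvec a L) (Wvec a K) := by
  ext i k
  simp only [hankelOf, expSignal, Wvec, of_apply, vecMulVec_apply, pow_add]

theorem Wvec_rev (ha : a ≠ 0) (s : Fin M) : Wvec a M s.rev = a ^ (M - 1) * a⁻¹ ^ (s : ℕ) := by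
  have hsplit : M - 1 = M - (s + 1) + s := by omega
  rw [Wvec, Fin.val_rev, hsplit, pow_add, inv_pow, mul_inv_cancel_right₀ (pow_ne_zero _ ha)]

theorem Wvec_dotProduct_self (ha : a ≠ 0) (M : ℕ) :
    Wvec a M ⬝ᵥ Wvec a M = (a ^ (M - 1)) ^ 2 * ∑ s ∈ Finset.range M, (a⁻¹ ^ 2) ^ s := by
  rw [dotProduct_self_eq_sum_sq, ← sum_fin_rev, Finset.sum_range, Finset.mul_sum]
  refine Finset.sum_congr rfl fun s _ => ?_
  rw [Wvec_rev ha, mul_pow, pow_right_comm a⁻¹]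

theorem lineProj_Wvec_rev_rev (ha : a ≠ 0) (s i : Fin M) :
    lineProj (Wvec a M) s.rev i.rev =
      (∑ r ∈ Finset.range M, (a⁻¹ ^ 2) ^ r)⁻¹ * (a⁻¹ ^ (s : ℕ) * a⁻¹ ^ (i : ℕ)) := by
  have hpow : a ^ (M - 1) ≠ 0 := pow_ne_zero _ ha
  rw [lineProj, Matrix.smul_apply, vecMulVec_apply, Wvec_dotProduct_self ha, Wvec_rev ha,
    Wvec_rev ha, mul_inv, smul_eq_mul]
  field_simp

theorem pow_mul_pow_le_norm_vecMulVec_Wvec (a : ℝ) (hL : 0 < L) (hK : 0 < K) :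
    a ^ (L - 1) * a ^ (K - 1) ≤ ‖vecMulVec (Wvec a L) (Wvec a K)‖ := by
  have hlast := abs_apply_le_frobenius_norm (vecMulVec (Wvec a L) (Wvec a K))
    ⟨L - 1, by omega⟩ ⟨K - 1, by omega⟩
  rw [vecMulVec_apply, Wvec, Wvec] at hlast
  exact (le_abs_self _).trans hlast

theorem norm_hankelOf_sq_le {x : ℕ → ℝ} (hx : ∀ n, |x n| ≤ 1) (L K : ℕ) :
    ‖hankelOf x L K‖ ^ 2 ≤ L * K := by
  rw [frobenius_norm_sq]
  refine (Finset.sum_le_sum fun i _ => Finset.sum_le_sum fun k _ =>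
    (sq_le_one_iff_abs_le_one (hankelOf x L K i k)).2 (hx (i + k))).trans_eq ?_
  simp

end ExponentialSignal

section HarmonicNoise

open Finset.HasAntidiagonal

variable {a : ℝ} {η B : ℂ} {L K M : ℕ}

/-- The factor by which the orthogonal projection onto `Wvec a M` multiplies a complex harmonic
`η ^ s`, where `s` counts entries from the end of the vector and the image is normalised to
`a⁻¹ ^ s`. -/
noncomputable def projGain (a : ℝ) (η : ℂ) (M : ℕ) : ℂ :=
  ((∑ s ∈ Finset.range M, (a⁻¹ ^ 2) ^ s : ℝ) : ℂ)⁻¹ * ∑ s ∈ Finset.range M, ((a⁻¹ : ℝ) * η) ^ s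

theorem lineProj_Wvec_mulVec_rev (ha : a ≠ 0) {f : Fin M → ℝ}
    (hf : ∀ i : Fin M, f i.rev = (B * η ^ (i : ℕ)).re) (s : Fin M) :
    (lineProj (Wvec a M) *ᵥ f) s.rev = (B * projGain a η M * (a⁻¹ : ℝ) ^ (s : ℕ)).re := by
  have hterm (i : Fin M) : lineProj (Wvec a M) s.rev i.rev * f i.rev =
      (B * (((∑ r ∈ Finset.range M, (a⁻¹ ^ 2) ^ r : ℝ) : ℂ)⁻¹ * ((a⁻¹ : ℝ) * η) ^ (i : ℕ)) *
        (a⁻¹ : ℝ) ^ (s : ℕ)).re := by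
    rw [lineProj_Wvec_rev_rev ha, hf, ← Complex.re_ofReal_mul]
    push_cast
    ring_nf
  simp only [mulVec, dotProduct]
  rw [← sum_fin_rev]
  simp only [hterm, projGain, Finset.sum_range, Finset.mul_sum, Finset.sum_mul, Complex.re_sum]

theorem lineProj_Wvec_mul_rev {κ : Type*} (ha : a ≠ 0) {F : Matrix (Fin M) κ ℝ} {t : κ}
    (hF : ∀ i : Fin M, F i.rev t = (B * η ^ (i : ℕ)).re) (s : Fin M) :
    (lineProj (Wvec a M) * F) s.rev t = (B * projGain a η M * (a⁻¹ : ℝ) ^ (s : ℕ)).re :=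
  lineProj_Wvec_mulVec_rev ha (f := fun i => F i t) hF s

theorem mul_lineProj_Wvec_rev {κ : Type*} (ha : a ≠ 0) {F : Matrix κ (Fin M) ℝ} {s : κ}
    (hF : ∀ i : Fin M, F s i.rev = (B * η ^ (i : ℕ)).re) (t : Fin M) :
    (F * lineProj (Wvec a M)) s t.rev = (B * projGain a η M * (a⁻¹ : ℝ) ^ (t : ℕ)).re := by
  have hsymm : (lineProj (Wvec a M))ᵀ = lineProj (Wvec a M) := by
    rw [lineProj, transpose_smul, transpose_vecMulVec]
  rw [← lineProj_Wvec_mul_rev (F := Fᵀ) ha hF, ← transpose_apply (F * _), transpose_mul, hsymm]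

theorem rankOneVariation_Wvec_rev_rev (ha : a ≠ 0) {F : Matrix (Fin L) (Fin K) ℝ}
    (hF : ∀ s t, F (Fin.rev s) (Fin.rev t) = (B * η ^ (s : ℕ) * η ^ (t : ℕ)).re)
    (s : Fin L) (t : Fin K) :
    rankOneVariation (Wvec a L) (Wvec a K) F s.rev t.rev =
      (B * (projGain a η L * ((a⁻¹ : ℝ) ^ (s : ℕ) * η ^ (t : ℕ)) +
        projGain a η K * ((a⁻¹ : ℝ) ^ (t : ℕ) * η ^ (s : ℕ)) -
        projGain a η L * projGain a η K * (a⁻¹ : ℝ) ^ ((s : ℕ) + (t : ℕ)))).re := by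
  have hleft (s : Fin L) (t : Fin K) : (lineProj (Wvec a L) * F) s.rev t.rev =
      (B * projGain a η L * (a⁻¹ : ℝ) ^ (s : ℕ) * η ^ (t : ℕ)).re := by
    rw [lineProj_Wvec_mul_rev ha (B := B * η ^ (t : ℕ)) fun i => by rw [hF, mul_right_comm]]
    ring_nf
  rw [rankOneVariation, Matrix.sub_apply, Matrix.add_apply, hleft, mul_lineProj_Wvec_rev ha (hF s),
    mul_lineProj_Wvec_rev ha (hleft s), ← Complex.add_re, ← Complex.sub_re]
  ring_nf

/-- The averaged trailing antidiagonal of `rankOneVariation` for the noise `η ^ (s + t)`, as a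
function of the projection gains `κ` and `κ'` on the two sides; `ℓ` counts antidiagonals from the
last one. -/
noncomputable def trailingResponse (a : ℝ) (η : ℂ) (ℓ : ℕ) (κ κ' : ℂ) : ℂ :=
  (κ + κ') * ((∑ st ∈ antidiagonal ℓ, (a⁻¹ : ℝ) ^ st.1 * η ^ st.2) / (ℓ + 1)) -
    κ * κ' * (a⁻¹ : ℝ) ^ ℓ

theorem hankelize_rankOneVariation_Wvec (ha : a ≠ 0) {F : Matrix (Fin L) (Fin K) ℝ}
    (hF : ∀ s t, F (Fin.rev s) (Fin.rev t) = (B * η ^ (s : ℕ) * η ^ (t : ℕ)).re)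
    {j ℓ : ℕ} (hL : ℓ < L) (hK : ℓ < K) (hj : j + ℓ + 2 = L + K) :
    hankelize (rankOneVariation (Wvec a L) (Wvec a K) F) j =
      (B * trailingResponse a η ℓ (projGain a η L) (projGain a η K)).re := by
  have hswap : ∑ st ∈ antidiagonal ℓ, ((a⁻¹ : ℝ) : ℂ) ^ st.2 * η ^ st.1 =
      ∑ st ∈ antidiagonal ℓ, ((a⁻¹ : ℝ) : ℂ) ^ st.1 * η ^ st.2 :=
    Finset.Nat.sum_antidiagonal_swap (f := fun st => ((a⁻¹ : ℝ) : ℂ) ^ st.1 * η ^ st.2)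
  have hconst : ∑ st ∈ antidiagonal ℓ, ((a⁻¹ : ℝ) : ℂ) ^ (st.1 + st.2) =
      (ℓ + 1) * (a⁻¹ : ℝ) ^ ℓ := by
    rw [Finset.sum_congr rfl fun st hst => by rw [mem_antidiagonal.1 hst]]
    simp
  have hℓ : (ℓ + 1 : ℂ) ≠ 0 := Nat.cast_add_one_ne_zero ℓ
  rw [hankelize_eq_sum_antidiagonal_div (f := fun s t => (B * (projGain a η L *
    ((a⁻¹ : ℝ) ^ s * η ^ t) + projGain a η K * ((a⁻¹ : ℝ) ^ t * η ^ s) -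
    projGain a η L * projGain a η K * (a⁻¹ : ℝ) ^ (s + t))).re)
    (rankOneVariation_Wvec_rev_rev ha hF) hL hK hj,
    ← Complex.re_sum, ← Finset.mul_sum, Finset.sum_sub_distrib, Finset.sum_add_distrib,
    ← Finset.mul_sum, ← Finset.mul_sum, ← Finset.mul_sum, hswap, hconst, trailingResponse]
  rw [← Nat.cast_add_one (R := ℝ), ← Complex.div_natCast_re, Nat.cast_add_one]
  congr 1
  field_simp

theorem hankelOf_cosNoise_rev_rev (ξ φ : ℝ) (s : Fin L) (t : Fin K) :
    hankelOf (cosNoise ξ φ) L K s.rev t.rev =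
      (Complex.exp ((ξ * (L + K - 2) + φ : ℝ) * Complex.I) *
        Complex.exp (-(ξ * Complex.I)) ^ (s : ℕ) *
        Complex.exp (-(ξ * Complex.I)) ^ (t : ℕ)).re := by
  rw [← Complex.exp_nat_mul, ← Complex.exp_nat_mul, ← Complex.exp_add, ← Complex.exp_add]
  have hs : (s : ℕ) + 1 ≤ L := s.2
  have ht : (t : ℕ) + 1 ≤ K := t.2
  have harg : ((ξ * (L + K - 2) + φ : ℝ) : ℂ) * Complex.I + s * -(ξ * Complex.I) +
      t * -(ξ * Complex.I) = ((ξ * ((s.rev : ℕ) + (t.rev : ℕ) : ℕ) + φ : ℝ) : ℂ) * Complex.I := by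
    rw [Fin.val_rev, Fin.val_rev]
    push_cast [hs, ht]
    ring
  rw [harg, Complex.exp_ofReal_mul_I_re, hankelOf, of_apply, cosNoise]

end HarmonicNoise

section LimitingResponse

open Finset.HasAntidiagonal
open scoped Topology

variable {a : ℝ}

theorem tendsto_projGain (ha : 1 < a) {η : ℂ} (hη : ‖η‖ = 1) :
    Tendsto (projGain a η) atTop (𝓝 ((1 - (a : ℂ)⁻¹ ^ 2) * (1 - (a : ℂ)⁻¹ * η)⁻¹)) := by
  have hb : a⁻¹ < 1 := inv_lt_one_of_one_lt₀ ha
  have hb0 : 0 < a⁻¹ := inv_pos.2 (zero_lt_one.trans ha)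
  have hb2 : a⁻¹ ^ 2 < 1 := pow_lt_one₀ hb0.le hb two_ne_zero
  have hbη : ‖((a⁻¹ : ℝ) : ℂ) * η‖ < 1 := by
    rwa [norm_mul, hη, mul_one, Complex.norm_of_nonneg hb0.le]
  have hden := (hasSum_geometric_of_lt_one (sq_nonneg a⁻¹) hb2).tendsto_sum_nat.ofReal
  have hnum := (hasSum_geometric_of_norm_lt_one hbη).tendsto_sum_nat
  have hne : ((1 - a⁻¹ ^ 2)⁻¹ : ℝ) ≠ 0 := inv_ne_zero (sub_pos.2 hb2).ne'
  unfold projGain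
  simpa using (hden.inv₀ (Complex.ofReal_ne_zero.2 hne)).mul hnum

theorem sub_exp_mul_sub_exp_neg (a ξ : ℝ) :
    (a - Complex.exp (ξ * Complex.I)) * (a - Complex.exp (-(ξ * Complex.I))) =
      (a ^ 2 + 1 - 2 * a * Real.cos ξ : ℝ) := by
  have hprod : Complex.exp (ξ * Complex.I) * Complex.exp (-(ξ * Complex.I)) = 1 := by
    rw [← Complex.exp_add, add_neg_cancel, Complex.exp_zero]
  have hsum : Complex.exp (ξ * Complex.I) + Complex.exp (-(ξ * Complex.I)) = 2 * Complex.cos ξ := by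
    rw [Complex.two_cos, neg_mul]
  push_cast
  linear_combination hprod - a * hsum

theorem sq_add_one_sub_two_mul_cos_pos (ha : 1 < a) (ξ : ℝ) :
    0 < a ^ 2 + 1 - 2 * a * Real.cos ξ := by
  nlinarith [Real.cos_le_one ξ]

theorem tendsto_projGain_exp (ha : 1 < a) (ξ : ℝ) :
    Tendsto (projGain a (Complex.exp (-(ξ * Complex.I)))) atTop
      (𝓝 (Gfun a ξ * (a - Complex.exp (ξ * Complex.I)))) := by
  have hη : ‖Complex.exp (-(ξ * Complex.I))‖ = 1 := by
    simpa using Complex.norm_exp_ofReal_mul_I (-ξ)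
  convert tendsto_projGain ha hη using 2
  have hfactor := sub_exp_mul_sub_exp_neg a ξ
  have hpos := sq_add_one_sub_two_mul_cos_pos ha ξ
  have hne : (a - Complex.exp (ξ * Complex.I)) * (a - Complex.exp (-(ξ * Complex.I))) ≠ 0 := by
    rw [hfactor]
    exact Complex.ofReal_ne_zero.2 hpos.ne'
  have ha0 : (a : ℂ) ≠ 0 := Complex.ofReal_ne_zero.2 (by linarith)
  have hw := left_ne_zero_of_mul hne
  have hη' := right_ne_zero_of_mul hne
  have hG : (Gfun a ξ : ℂ) = (a ^ 2 - 1) /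
      (a * ((a - Complex.exp (ξ * Complex.I)) * (a - Complex.exp (-(ξ * Complex.I))))) := by
    rw [hfactor, Gfun]
    push_cast
    rfl
  have hinv : 1 - (a : ℂ)⁻¹ * Complex.exp (-(ξ * Complex.I)) =
      (a - Complex.exp (-(ξ * Complex.I))) / a := by
    field_simp
  rw [hG, hinv]
  field_simp

theorem sum_antidiagonal_mul_inv_sub_inv {𝕜 : Type*} [Field 𝕜] {x y : 𝕜} (hx : x ≠ 0)
    (hy : y ≠ 0) (ℓ : ℕ) :
    (∑ st ∈ antidiagonal ℓ, x ^ st.1 * y ^ st.2) * (x⁻¹ - y⁻¹) = x⁻¹ * y ^ ℓ - x ^ ℓ * y⁻¹ := by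
  have hgeom : (∑ st ∈ antidiagonal ℓ, x ^ st.1 * y ^ st.2) * (x - y) =
      x ^ (ℓ + 1) - y ^ (ℓ + 1) := by
    rw [Finset.Nat.sum_antidiagonal_eq_sum_range_succ (fun i j => x ^ i * y ^ j)]
    exact geom_sum₂_mul x y (ℓ + 1)
  field_simp
  linear_combination -hgeom

theorem exp_neg_mul_I_pow (ξ : ℝ) (ℓ : ℕ) :
    Complex.exp (-(ξ * Complex.I)) ^ ℓ =
      (Real.cos (ℓ * ξ) : ℂ) - Real.sin (ℓ * ξ) * Complex.I := by
  have harg : (ℓ : ℂ) * -(ξ * Complex.I) = ((-(ℓ * ξ) : ℝ) : ℂ) * Complex.I := by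
    push_cast
    ring
  rw [← Complex.exp_nat_mul, harg, Complex.exp_mul_I, ← Complex.ofReal_cos, ← Complex.ofReal_sin,
    Real.cos_neg, Real.sin_neg]
  push_cast
  ring

theorem sub_exp_mul_I_sq (a ξ : ℝ) :
    (a - Complex.exp (ξ * Complex.I)) ^ 2 =
      ((a ^ 2 + 1 - 2 * a * Real.cos ξ - 2 * Real.sin ξ ^ 2 : ℝ) : ℂ) -
        (2 * Real.sin ξ * (a - Real.cos ξ) : ℝ) * Complex.I := by
  have hcircle := Complex.cos_sq_add_sin_sq ξ
  rw [Complex.exp_mul_I]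
  push_cast
  linear_combination Complex.sin ξ ^ 2 * Complex.I_sq + hcircle

theorem sum_antidiagonal_mul_sub_exp (ha : a ≠ 0) (ξ : ℝ) (ℓ : ℕ) :
    (∑ st ∈ antidiagonal ℓ, ((a⁻¹ : ℝ) : ℂ) ^ st.1 * Complex.exp (-(ξ * Complex.I)) ^ st.2) *
        (a - Complex.exp (ξ * Complex.I)) =
      ((a * Real.cos (ℓ * ξ) - a⁻¹ ^ ℓ * Real.cos ξ : ℝ) : ℂ) -
        (a * Real.sin (ℓ * ξ) + a⁻¹ ^ ℓ * Real.sin ξ : ℝ) * Complex.I := by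
  have hb : ((a⁻¹ : ℝ) : ℂ) ≠ 0 := Complex.ofReal_ne_zero.2 (inv_ne_zero ha)
  have hgeom := sum_antidiagonal_mul_inv_sub_inv hb (Complex.exp_ne_zero (-(ξ * Complex.I))) ℓ
  rw [← Complex.ofReal_inv, inv_inv, ← Complex.exp_neg, neg_neg] at hgeom
  rw [hgeom, exp_neg_mul_I_pow, Complex.exp_mul_I]
  push_cast
  ring

theorem trailingResponse_limit_eq (ha : a ≠ 0) (ξ : ℝ) (ℓ : ℕ) :
    trailingResponse a (Complex.exp (-(ξ * Complex.I))) ℓ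
        (Gfun a ξ * (a - Complex.exp (ξ * Complex.I)))
        (Gfun a ξ * (a - Complex.exp (ξ * Complex.I))) =
      Gfun a ξ * (C1 a ξ ℓ - C2 a ξ ℓ * Complex.I) := by
  have hsum := sum_antidiagonal_mul_sub_exp ha ξ ℓ
  have hsq := sub_exp_mul_I_sq a ξ
  have hpow : a ^ (-(ℓ : ℤ)) = a⁻¹ ^ ℓ := by rw [_root_.zpow_neg, zpow_natCast, inv_pow]
  rw [trailingResponse, C1, C2, hpow, add_comm (ℓ : ℂ)]
  push_cast at hsum hsq ⊢
  linear_combination (2 * Gfun a ξ / (1 + ℓ)) * hsum - Gfun a ξ ^ 2 * (a : ℂ)⁻¹ ^ ℓ * hsq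

theorem exp_mul_I_mul_re (θ c d : ℝ) :
    (Complex.exp (θ * Complex.I) * (c - d * Complex.I)).re = c * Real.cos θ + d * Real.sin θ := by
  simp only [Complex.mul_re, Complex.exp_ofReal_mul_I_re, Complex.exp_ofReal_mul_I_im,
    Complex.sub_re, Complex.sub_im, Complex.im_ofReal_mul, Complex.ofReal_re,
    Complex.ofReal_im, Complex.I_re, Complex.I_im]
  ring

end LimitingResponse

section ReconstructionError

open scoped Matrix.Norms.Frobenius Topology

variable {a ξ φ δ : ℝ}

theorem abs_recErr_sub_hankelize_rankOneVariation_le {L K : ℕ} {u : Fin L → ℝ}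
    (hu : IsTopEigenvector (HdeltaSq a ξ φ δ L K) u)
    (hnoise : 2 * ‖δ • hankelOf (cosNoise ξ φ) L K‖ < ‖vecMulVec (Wvec a L) (Wvec a K)‖)
    {j ℓ : ℕ} (hL : ℓ < L) (hK : ℓ < K) (hj : j + ℓ + 2 = L + K) :
    |recErr a ξ φ δ L K u j - hankelize (rankOneVariation (Wvec a L) (Wvec a K)
        (δ • hankelOf (cosNoise ξ φ) L K)) j| ≤
      32 * (‖δ • hankelOf (cosNoise ξ φ) L K‖ ^ 2 / ‖vecMulVec (Wvec a L) (Wvec a K)‖) := by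
  have hsignal : a ^ j = hankelize (hankelOf (expSignal a) L K) j :=
    (hankelize_hankelOf (expSignal a) hL hK hj).symm
  rw [HdeltaSq, hankelOf_expSignal] at hu
  rw [recErr, hsignal, hankelOf_expSignal, ← hankelize_sub, ← hankelize_sub, ← mul_div_assoc]
  exact (abs_hankelize_le_norm _ j).trans (hu.norm_vecMulVec_mul_sub_le hnoise)

theorem norm_noise_sq_div_norm_signal_le (ha : 0 < a) {L K : ℕ} (hL : 0 < L) (hK : 0 < K) :
    ‖δ • hankelOf (cosNoise ξ φ) L K‖ ^ 2 / ‖vecMulVec (Wvec a L) (Wvec a K)‖ ≤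
      δ ^ 2 * ((L / a ^ (L - 1)) * (K / a ^ (K - 1))) := by
  have hE : ‖hankelOf (cosNoise ξ φ) L K‖ ^ 2 ≤ L * K :=
    norm_hankelOf_sq_le (fun _ => Real.abs_cos_le_one _) L K
  calc ‖δ • hankelOf (cosNoise ξ φ) L K‖ ^ 2 / ‖vecMulVec (Wvec a L) (Wvec a K)‖
      ≤ δ ^ 2 * (L * K) / (a ^ (L - 1) * a ^ (K - 1)) := by
        rw [norm_smul, mul_pow, Real.norm_eq_abs, sq_abs]
        gcongr
        exact pow_mul_pow_le_norm_vecMulVec_Wvec a hL hK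
    _ = δ ^ 2 * ((L / a ^ (L - 1)) * (K / a ^ (K - 1))) := by rw [div_mul_div_comm, mul_div_assoc]

theorem tendsto_natCast_div_pow_pred (ha : 1 < a) :
    Tendsto (fun n : ℕ => (n : ℝ) / a ^ (n - 1)) atTop (𝓝 0) := by
  have ha0 : a ≠ 0 := (zero_lt_one.trans ha).ne'
  have hpow : Tendsto (fun n : ℕ => a * ((n : ℝ) ^ 1 / a ^ n)) atTop (𝓝 0) := by
    simpa using (tendsto_pow_const_div_const_pow_of_one_lt 1 ha).const_mul a
  refine hpow.congr' ?_
  filter_upwards [eventually_gt_atTop 0] with n hn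
  rw [pow_one, ← mul_pow_sub_one hn.ne' a, ← mul_div_assoc, mul_div_mul_left _ _ ha0]

variable {ι : Type*} {l : Filter ι} {L K N : ι → ℕ}

theorem tendsto_norm_noise_sq_div_norm_signal (ha : 1 < a) (hL : Tendsto L l atTop)
    (hK : Tendsto K l atTop) :
    Tendsto (fun i => ‖δ • hankelOf (cosNoise ξ φ) (L i) (K i)‖ ^ 2 /
      ‖vecMulVec (Wvec a (L i)) (Wvec a (K i))‖) l (𝓝 0) := by
  have hdecay := tendsto_natCast_div_pow_pred ha
  have hbound := ((hdecay.comp hL).mul (hdecay.comp hK)).const_mul (δ ^ 2)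
  rw [mul_zero, mul_zero] at hbound
  refine squeeze_zero' (.of_forall fun i => by positivity) ?_ hbound
  filter_upwards [hL.eventually_gt_atTop 0, hK.eventually_gt_atTop 0] with i hLi hKi
  exact norm_noise_sq_div_norm_signal_le (zero_lt_one.trans ha) hLi hKi

theorem eventually_two_mul_norm_noise_lt_norm_signal (ha : 1 < a) (hL : Tendsto L l atTop)
    (hK : Tendsto K l atTop) :
    ∀ᶠ i in l, 2 * ‖δ • hankelOf (cosNoise ξ φ) (L i) (K i)‖ <
      ‖vecMulVec (Wvec a (L i)) (Wvec a (K i))‖ := by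
  have hvanish := tendsto_norm_noise_sq_div_norm_signal (ξ := ξ) (φ := φ) (δ := δ) ha hL hK
  filter_upwards [hvanish.eventually_lt_const (show (0 : ℝ) < 1 / 4 by norm_num),
    hL.eventually_gt_atTop 0, hK.eventually_gt_atTop 0] with i hratio hLi hKi
  have hone : 1 ≤ ‖vecMulVec (Wvec a (L i)) (Wvec a (K i))‖ :=
    (one_le_mul_of_one_le_of_one_le (one_le_pow₀ ha.le) (one_le_pow₀ ha.le)).trans
      (pow_mul_pow_le_norm_vecMulVec_Wvec a hLi hKi)
  rw [div_lt_iff₀ (zero_lt_one.trans_le hone)] at hratio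
  refine lt_of_pow_lt_pow_left₀ 2 (norm_nonneg _) ?_
  calc (2 * ‖δ • hankelOf (cosNoise ξ φ) (L i) (K i)‖) ^ 2
      < ‖vecMulVec (Wvec a (L i)) (Wvec a (K i))‖ := by rw [mul_pow]; linarith
    _ ≤ ‖vecMulVec (Wvec a (L i)) (Wvec a (K i))‖ ^ 2 := le_self_pow₀ hone two_ne_zero

theorem hankelize_rankOneVariation_noise (ha : a ≠ 0) {L K N : ℕ} (hLK : L + K = N + 1)
    {ℓ : ℕ} (hL : ℓ < L) (hK : ℓ < K) :
    hankelize (rankOneVariation (Wvec a L) (Wvec a K) (δ • hankelOf (cosNoise ξ φ) L K))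
        (N - 1 - ℓ) =
      δ * (Complex.exp ((ξ * (N - 1) + φ : ℝ) * Complex.I) *
        trailingResponse a (Complex.exp (-(ξ * Complex.I))) ℓ
          (projGain a (Complex.exp (-(ξ * Complex.I))) L)
          (projGain a (Complex.exp (-(ξ * Complex.I))) K)).re := by
  have hphase : (L : ℝ) + K - 2 = N - 1 := by
    have : (L : ℝ) + K = N + 1 := by exact_mod_cast hLK
    linarith
  rw [← Complex.re_ofReal_mul, ← mul_assoc]
  refine hankelize_rankOneVariation_Wvec ha (fun s t => ?_) hL hK (by omega)
  rw [Matrix.smul_apply, hankelOf_cosNoise_rev_rev, hphase, smul_eq_mul, ← Complex.re_ofReal_mul]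
  simp only [mul_assoc]

theorem tendsto_response_sub (ha : 1 < a) (hL : Tendsto L l atTop) (hK : Tendsto K l atTop)
    (ℓ : ℕ) (θ : ι → ℝ) :
    Tendsto (fun i => (Complex.exp (θ i * Complex.I) *
        trailingResponse a (Complex.exp (-(ξ * Complex.I))) ℓ
          (projGain a (Complex.exp (-(ξ * Complex.I))) (L i))
          (projGain a (Complex.exp (-(ξ * Complex.I))) (K i))).re -
      Gfun a ξ * (C1 a ξ ℓ * Real.cos (θ i) + C2 a ξ ℓ * Real.sin (θ i))) l (𝓝 0) := by
  have hgain := tendsto_projGain_exp ha ξ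
  have hcont : Continuous fun κ : ℂ × ℂ =>
      trailingResponse a (Complex.exp (-(ξ * Complex.I))) ℓ κ.1 κ.2 := by
    unfold trailingResponse
    fun_prop
  have hresponse := (hcont.tendsto _).comp ((hgain.comp hL).prodMk_nhds (hgain.comp hK))
  rw [trailingResponse_limit_eq (zero_lt_one.trans ha).ne'] at hresponse
  refine squeeze_zero_norm (fun i => ?_) (tendsto_iff_norm_sub_tendsto_zero.1 hresponse)
  rw [← exp_mul_I_mul_re, ← Complex.re_ofReal_mul, mul_left_comm, ← Complex.sub_re, ← mul_sub]
  refine (Complex.abs_re_le_norm _).trans_eq ?_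
  rw [norm_mul, Complex.norm_exp_ofReal_mul_I, one_mul]
  rfl

theorem stmt_4_general (ha : 1 < a) (hL : Tendsto L l atTop) (hK : Tendsto K l atTop)
    (hLK : ∀ᶠ i in l, L i + K i = N i + 1) {u : ∀ i, Fin (L i) → ℝ}
    (hu : ∀ᶠ i in l, IsTopEigenvector (HdeltaSq a ξ φ δ (L i) (K i)) (u i)) (ℓ : ℕ) :
    Tendsto (fun i => recErr a ξ φ δ (L i) (K i) (u i) (N i - 1 - ℓ) -
      δ * Gfun a ξ * (C1 a ξ ℓ * Real.cos (ξ * ((N i : ℝ) - 1) + φ) +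
        C2 a ξ ℓ * Real.sin (ξ * ((N i : ℝ) - 1) + φ))) l (𝓝 0) := by
  have hremainder := (tendsto_norm_noise_sq_div_norm_signal (ξ := ξ) (φ := φ) (δ := δ) ha hL
    hK).const_mul 32
  have hresponse := (tendsto_response_sub (ξ := ξ) ha hL hK ℓ
    fun i => ξ * ((N i : ℝ) - 1) + φ).const_mul δ
  rw [mul_zero] at hremainder hresponse
  have herror : Tendsto (fun i => recErr a ξ φ δ (L i) (K i) (u i) (N i - 1 - ℓ) -
      δ * (Complex.exp ((ξ * (N i - 1) + φ : ℝ) * Complex.I) *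
        trailingResponse a (Complex.exp (-(ξ * Complex.I))) ℓ
          (projGain a (Complex.exp (-(ξ * Complex.I))) (L i))
          (projGain a (Complex.exp (-(ξ * Complex.I))) (K i))).re) l (𝓝 0) := by
    refine squeeze_zero_norm' ?_ hremainder
    filter_upwards [hLK, hu, eventually_two_mul_norm_noise_lt_norm_signal ha hL hK,
      hL.eventually_gt_atTop ℓ, hK.eventually_gt_atTop ℓ] with i hLKi hui hnoise hLi hKi
    rw [← hankelize_rankOneVariation_noise (zero_lt_one.trans ha).ne' hLKi hLi hKi]
    exact abs_recErr_sub_hankelize_rankOneVariation_le hui hnoise hLi hKi (by omega)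
  convert herror.add hresponse using 2 <;> ring

end ReconstructionError

theorem tendsto_atTop_of_tendsto_div_pos {L : ℕ → ℕ} {α : ℝ} (hα : 0 < α)
    (hlim : Tendsto (fun N : ℕ => (L N : ℝ) / (N : ℝ)) atTop (nhds α)) :
    Tendsto L atTop atTop := by
  refine tendsto_natCast_atTop_iff.1 ((hlim.pos_mul_atTop hα tendsto_natCast_atTop_atTop).congr' ?_)
  filter_upwards [eventually_ne_atTop 0] with N hN
  exact div_mul_cancel₀ _ (Nat.cast_ne_zero.2 hN)

theorem two_pi_mul_div_mul_phase_eq {p q : ℕ} (hq : q ≠ 0) (φ : ℝ) (k m : ℕ) :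
    2 * Real.pi * p / q * (((m * q + k + 1 : ℕ) : ℝ) - 1) + φ =
      2 * Real.pi * k * p / q + φ + (m * p : ℕ) * (2 * Real.pi) := by
  have hq0 : (q : ℝ) ≠ 0 := Nat.cast_ne_zero.2 hq
  push_cast
  field_simp
  ring

/-- for rational frequency `ω = p/q`, along the subsequence
`N_m = mq + k + 1` the last reconstruction errors converge. -/
theorem stmt_4 (a ξ φ α : ℝ) (ha : 1 < a) (hξ : ξ ∈ Set.Ioo 0 Real.pi)
    (hφ : φ ∈ Set.Ico 0 (2 * Real.pi)) (hα : α ∈ Set.Ioo (0 : ℝ) 1)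
    (L K : ℕ → ℕ)
    (hLK : ∀ N, 3 ≤ N → 1 < L N ∧ L N ≤ K N ∧ L N + K N = N + 1)
    (hlim : Tendsto (fun N : ℕ => (L N : ℝ) / (N : ℝ)) atTop (nhds α))
    (p q : ℕ) (hp : 0 < p) (hq : 0 < q) (hcop : Nat.Coprime p q) (hpq : 2 * p < q)
    (hξval : ξ = 2 * Real.pi * (p : ℝ) / (q : ℝ))
    (δ : ℝ) (ℓ : ℕ) (k : ℕ) (hk : k < q)
    (u : ∀ N : ℕ, Fin (L N) → ℝ)
    (hu : ∀ N, 3 ≤ N → IsTopEigenvector (HdeltaSq a ξ φ δ (L N) (K N)) (u N)) :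
    Tendsto (fun m : ℕ =>
        recErr a ξ φ δ (L (m * q + k + 1)) (K (m * q + k + 1)) (u (m * q + k + 1))
          (m * q + k + 1 - 1 - ℓ))
      atTop
      (nhds (δ * Gfun a ξ *
        (C1 a ξ ℓ * Real.cos (2 * Real.pi * (k : ℝ) * (p : ℝ) / (q : ℝ) + φ) +
         C2 a ξ ℓ * Real.sin (2 * Real.pi * (k : ℝ) * (p : ℝ) / (q : ℝ) + φ)))) := by
  have hsubseq : Tendsto (fun m : ℕ => m * q + k + 1) atTop atTop :=
    tendsto_atTop_mono (fun m => (Nat.le_mul_of_pos_right m hq).trans (by omega)) tendsto_id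
  have hlarge := hsubseq.eventually_ge_atTop 3
  have hL : Tendsto (fun m => L (m * q + k + 1)) atTop atTop :=
    (tendsto_atTop_of_tendsto_div_pos hα.1 hlim).comp hsubseq
  have hK : Tendsto (fun m => K (m * q + k + 1)) atTop atTop :=
    tendsto_atTop_mono' _ (hlarge.mono fun m hm => (hLK _ hm).2.1) hL
  have hmain := stmt_4_general ha hL hK (hlarge.mono fun m hm => (hLK _ hm).2.2)
    (hlarge.mono fun m hm => hu _ hm) ℓ
  simp only [hξval, two_pi_mul_div_mul_phase_eq hq.ne', Real.cos_add_nat_mul_two_pi,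
    Real.sin_add_nat_mul_two_pi] at hmain ⊢
  exact tendsto_sub_nhds_zero_iff.1 hmain
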